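/- arXiv:1712.05129 — 4 statements merged into one kernel-verified Lean document; each statement's English description precedes it below -/
import Mathlib

section
/- Every finite group G has the comparison property: for any action of G by homeomorphisms on a zero-dimensional compact metric space X and any clopen sets A, B ⊆ X such that μ(A) < μ(B) for every G-invariant Borel probability measure μ on X, one has A ≼ B. -/
/-!
STATEMENT 5 (Remark `finitecomp` of the paper):
Every finite group has the comparison property: for any action of a finite group `G` by
homeomorphisms on a zero-dimensional compact metric space `X` and any clopen `A, B ⊆ X`
with `μ(A) < μ(B)` for every `G`-invariant Borel probability measure `μ`, one has `A ≼ B`.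
-/

open Pointwise MeasureTheory

/-- `A` is subequivalent to `B` (`A ≼ B`). -/
def Subequiv (G : Type*) [Group G] (X : Type*) [TopologicalSpace X] [MulAction G X]
    (A B : Set X) : Prop :=
  ∃ (k : ℕ) (Ai : Fin k → Set X) (g : Fin k → G),
    (∀ i, IsClopen (Ai i)) ∧ A = ⋃ i, Ai i ∧
    (Pairwise fun i j => Disjoint (Ai i) (Ai j)) ∧
    (∀ i, g i • Ai i ⊆ B) ∧
    (Pairwise fun i j => Disjoint (g i • Ai i) (g j • Ai j))

/-!
Going through the elements of the finite group `G` one at a time, move by `g` whatever is left of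
`A` into whatever is left of `B`. This matches a clopen `A' ⊆ A` piecewise with a clopen `B' ⊆ B` in
such a way that no orbit meets both `A \ A'` and `B \ B'`. If some `x ∈ A \ A'` remained, the
uniform measure `μ` on its orbit would satisfy `μ B = μ B' = μ A' < μ A`.
-/

theorem pairwise_disjoint_sumElim {α ι κ : Type*} {P : ι → Set α} {Q : κ → Set α}
    (hP : Pairwise fun i j => Disjoint (P i) (P j)) (hQ : Pairwise fun i j => Disjoint (Q i) (Q j))
    (hPQ : Disjoint (⋃ i, P i) (⋃ j, Q j)) :
    Pairwise fun i j => Disjoint (Sum.elim P Q i) (Sum.elim P Q j) := by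
  have disjoint_of_cross (i : ι) (j : κ) : Disjoint (P i) (Q j) :=
    hPQ.mono (Set.subset_iUnion P i) (Set.subset_iUnion Q j)
  rintro (i | i) (j | j) hij
  · exact hP (ne_of_apply_ne Sum.inl hij)
  · exact disjoint_of_cross i j
  · exact (disjoint_of_cross j i).symm
  · exact hQ (ne_of_apply_ne Sum.inr hij)

section Equidecomposition

variable {G X : Type*} [Group G] [TopologicalSpace X] [MulAction G X]

theorem isClopen_smul_set [ContinuousConstSMul G X] {A : Set X} (hA : IsClopen A) (g : G) :
    IsClopen (g • A) :=
  ⟨hA.isClosed.smul g, hA.isOpen.smul g⟩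

variable (G) in
/-- Equidecomposability of `A` and `B` by clopen pieces, the symmetric counterpart of `A ≼ B`: the
translated pieces fill `B`. The index type is an arbitrary finite type instead of `Fin k`, so that
two decompositions can be combined over a sum type. -/
def ClopenEquidecomposable (A B : Set X) : Prop :=
  ∃ (ι : Type) (_ : Finite ι) (P : ι → Set X) (g : ι → G),
    (∀ i, IsClopen (P i)) ∧ A = ⋃ i, P i ∧ (Pairwise fun i j => Disjoint (P i) (P j)) ∧
    B = ⋃ i, g i • P i ∧ (Pairwise fun i j => Disjoint (g i • P i) (g j • P j))

namespace ClopenEquidecomposable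

variable {A B A₁ A₂ B₁ B₂ : Set X}

theorem empty : ClopenEquidecomposable G (∅ : Set X) ∅ :=
  ⟨Empty, inferInstance, Empty.elim, Empty.elim, nofun, by simp, nofun, by simp, nofun⟩

theorem of_smul (hA : IsClopen A) (g : G) : ClopenEquidecomposable G A (g • A) :=
  ⟨Unit, inferInstance, fun _ => A, fun _ => g, fun _ => hA, (Set.iUnion_const A).symm,
    Subsingleton.pairwise, (Set.iUnion_const (g • A)).symm, Subsingleton.pairwise⟩

theorem union (h₁ : ClopenEquidecomposable G A₁ B₁) (h₂ : ClopenEquidecomposable G A₂ B₂)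
    (hA : Disjoint A₁ A₂) (hB : Disjoint B₁ B₂) :
    ClopenEquidecomposable G (A₁ ∪ A₂) (B₁ ∪ B₂) := by
  obtain ⟨ι, _, P, g, hP, rfl, hPdisj, rfl, hgPdisj⟩ := h₁
  obtain ⟨κ, _, Q, k, hQ, rfl, hQdisj, rfl, hkQdisj⟩ := h₂
  have smul_sumElim : (fun i => Sum.elim g k i • Sum.elim P Q i) =
      Sum.elim (fun i => g i • P i) (fun j => k j • Q j) := by
    ext (i | j) <;> rfl
  refine ⟨ι ⊕ κ, inferInstance, Sum.elim P Q, Sum.elim g k, Sum.forall.2 ⟨hP, hQ⟩,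
    ?_, pairwise_disjoint_sumElim hPdisj hQdisj hA, ?_, ?_⟩
  · simp only [Set.iUnion_sum, Sum.elim_inl, Sum.elim_inr]
  · simp only [Set.iUnion_sum, Sum.elim_inl, Sum.elim_inr]
  · simpa only [← smul_sumElim] using pairwise_disjoint_sumElim hgPdisj hkQdisj hB

theorem isClopen_left (h : ClopenEquidecomposable G A B) : IsClopen A := by
  obtain ⟨ι, _, P, g, hP, rfl, -⟩ := h
  exact isClopen_iUnion_of_finite hP

theorem isClopen_right [ContinuousConstSMul G X] (h : ClopenEquidecomposable G A B) :
    IsClopen B := by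
  obtain ⟨ι, _, P, g, hP, -, -, rfl, -⟩ := h
  exact isClopen_iUnion_of_finite fun i => isClopen_smul_set (hP i) (g i)

theorem subequiv {B' : Set X} (h : ClopenEquidecomposable G A B') (hB : B' ⊆ B) :
    Subequiv G X A B := by
  obtain ⟨ι, _, P, g, hP, rfl, hPdisj, rfl, hgPdisj⟩ := h
  obtain ⟨k, ⟨e⟩⟩ := Finite.exists_equiv_fin ι
  exact ⟨k, P ∘ e.symm, g ∘ e.symm, fun i => hP _, (e.symm.surjective.iUnion_comp P).symm,
    hPdisj.comp_of_injective e.symm.injective, fun i => (Set.subset_iUnion _ (e.symm i)).trans hB,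
    hgPdisj.comp_of_injective e.symm.injective⟩

theorem measure_eq [ContinuousConstSMul G X] [MeasurableSpace X] [BorelSpace X]
    (h : ClopenEquidecomposable G A B) (μ : Measure X) [SMulInvariantMeasure G X μ] :
    μ A = μ B := by
  obtain ⟨ι, _, P, g, hP, rfl, hPdisj, rfl, hgPdisj⟩ := h
  rw [measure_iUnion hPdisj fun i => (hP i).isOpen.measurableSet,
    measure_iUnion hgPdisj fun i => (isClopen_smul_set (hP i) (g i)).isOpen.measurableSet]
  simp only [measure_smul]

end ClopenEquidecomposable

theorem exists_clopenEquidecomposable_forall_disjoint_smul_sdiff [ContinuousConstSMul G X]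
    {A B : Set X} (hA : IsClopen A) (hB : IsClopen B) (s : Finset G) :
    ∃ A' ⊆ A, ∃ B' ⊆ B, ClopenEquidecomposable G A' B' ∧
      ∀ g ∈ s, Disjoint (g • (A \ A')) (B \ B') := by
  classical
  induction s using Finset.induction_on with
  | empty => exact ⟨∅, A.empty_subset, ∅, B.empty_subset, .empty, by simp⟩
  | insert g s _ ih =>
    obtain ⟨A', hA', B', hB', hAB, hdisj⟩ := ih
    let D : Set X := (A \ A') ∩ g⁻¹ • (B \ B')
    have hD : IsClopen D :=
      (hA.diff hAB.isClopen_left).inter (isClopen_smul_set (hB.diff hAB.isClopen_right) g⁻¹)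
    have D_subset : D ⊆ A \ A' := Set.inter_subset_left
    have smul_D : g • D = g • (A \ A') ∩ (B \ B') := by
      rw [Set.smul_set_inter, smul_inv_smul]
    have smul_D_subset : g • D ⊆ B \ B' := smul_D.trans_subset Set.inter_subset_right
    refine ⟨A' ∪ D, Set.union_subset hA' (D_subset.trans Set.sdiff_subset),
      B' ∪ g • D, Set.union_subset hB' (smul_D_subset.trans Set.sdiff_subset),
      hAB.union (.of_smul hD g) (Set.disjoint_sdiff_right.mono_right D_subset)
        (Set.disjoint_sdiff_right.mono_right smul_D_subset), ?_⟩
    simp only [← Set.sdiff_sdiff]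
    refine Finset.forall_mem_insert .. |>.2 ⟨?_, fun k hk => ?_⟩
    · have disjoint_smul_D : Disjoint (g • (A \ A')) ((B \ B') \ g • D) := by
        rw [smul_D, Set.inter_comm, Set.sdiff_self_inter]
        exact Set.disjoint_sdiff_right
      exact disjoint_smul_D.mono_left (Set.smul_set_mono Set.sdiff_subset)
    · exact (hdisj k hk).mono (Set.smul_set_mono Set.sdiff_subset) Set.sdiff_subset

end Equidecomposition

section OrbitMeasure

variable (G : Type*) {X : Type*} [Group G] [MulAction G X] [MeasurableSpace X]

/-- The uniform probability measure on the orbit of `x` under a finite group `G`, as the average of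
the point masses at `g • x` over `g : G`. For infinite `G` this is the zero measure. -/
noncomputable def orbitMeasure (x : X) : Measure X :=
  (ENat.card G : ENNReal)⁻¹ • Measure.sum fun g : G => Measure.dirac (g • x)

theorem orbitMeasure_apply (x : X) {s : Set X} (hs : MeasurableSet s) :
    orbitMeasure G x s = (ENat.card G : ENNReal)⁻¹ * ∑' g : G, s.indicator 1 (g • x) := by
  simp only [orbitMeasure, Measure.smul_apply, Measure.sum_apply _ hs, Measure.dirac_apply' _ hs,
    smul_eq_mul]

theorem orbitMeasure_eq_zero_iff [Finite G] (x : X) {s : Set X} (hs : MeasurableSet s) :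
    orbitMeasure G x s = 0 ↔ ∀ g : G, g • x ∉ s := by
  simp [orbitMeasure_apply G x hs, ENNReal.tsum_eq_zero, not_infinite_iff_finite.2 ‹Finite G›]

instance [Finite G] (x : X) : IsProbabilityMeasure (orbitMeasure G x) where
  measure_univ := by
    rw [orbitMeasure_apply G x .univ]
    simp only [Set.indicator_univ, Pi.one_apply, ENNReal.tsum_one]
    exact ENNReal.inv_mul_cancel (by simp) (by simpa using ‹Finite G›)

instance [MeasurableConstSMul G X] (x : X) : SMulInvariantMeasure G X (orbitMeasure G x) where
  measure_preimage_smul c s hs := by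
    rw [orbitMeasure_apply G x (measurable_const_smul c hs), orbitMeasure_apply G x hs,
      ← (Equiv.mulLeft c).tsum_eq fun g => s.indicator 1 (g • x)]
    simp only [Equiv.coe_mulLeft, mul_smul]
    rfl

end OrbitMeasure

theorem stmt5_general (G : Type*) [Group G] [Finite G]
    (X : Type*) [TopologicalSpace X] [MeasurableSpace X] [BorelSpace X]
    [MulAction G X] [ContinuousConstSMul G X]
    (A B : Set X) (hA : IsClopen A) (hB : IsClopen B)
    (h : ∀ μ : Measure X, IsProbabilityMeasure μ → SMulInvariantMeasure G X μ → μ A ≤ μ B) :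
    Subequiv G X A B := by
  have := Fintype.ofFinite G
  obtain ⟨A', hA', B', hB', hAB, hdisj⟩ :=
    exists_clopenEquidecomposable_forall_disjoint_smul_sdiff hA hB (Finset.univ : Finset G)
  suffices A ⊆ A' from this.antisymm hA' ▸ hAB.subequiv hB'
  by_contra hsub
  obtain ⟨x, hxA, hxA'⟩ := Set.not_subset.1 hsub
  let μ := orbitMeasure G x
  have measurableSet_sdiff_A : MeasurableSet (A \ A') :=
    (hA.diff hAB.isClopen_left).isOpen.measurableSet
  have measurableSet_sdiff_B : MeasurableSet (B \ B') :=
    (hB.diff hAB.isClopen_right).isOpen.measurableSet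
  have measure_sdiff_B : μ (B \ B') = 0 :=
    (orbitMeasure_eq_zero_iff G x measurableSet_sdiff_B).2 fun g =>
      Set.disjoint_left.1 (hdisj g (Finset.mem_univ g)) (Set.smul_mem_smul_set ⟨hxA, hxA'⟩)
  have measure_sdiff_A : 0 < μ (A \ A') := pos_iff_ne_zero.2 fun hzero =>
    (orbitMeasure_eq_zero_iff G x measurableSet_sdiff_A).1 hzero 1 (by simp [hxA, hxA'])
  refine (h μ inferInstance inferInstance).not_gt ?_
  calc μ B = μ B' := (measure_eq_measure_of_null_sdiff hB' measure_sdiff_B).symm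
    _ = μ A' := (hAB.measure_eq μ).symm
    _ < μ A := by
      rwa [← tsub_pos_iff_lt, ← measure_sdiff hA'
        hAB.isClopen_left.isOpen.measurableSet.nullMeasurableSet (measure_ne_top μ A')]

theorem stmt5 (G : Type*) [Group G] [Finite G]
    (X : Type*) [TopologicalSpace X] [CompactSpace X] [TopologicalSpace.MetrizableSpace X]
    [TotallyDisconnectedSpace X] [MeasurableSpace X] [BorelSpace X]
    [MulAction G X] [ContinuousConstSMul G X]
    (A B : Set X) (hA : IsClopen A) (hB : IsClopen B)
    (h : ∀ μ : Measure X, IsProbabilityMeasure μ → SMulInvariantMeasure G X μ → μ A < μ B) :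
    Subequiv G X A B := by
  exact stmt5_general G X A B hA hB fun μ hμ hinv => (h μ hμ hinv).le
end

section
/- Let a countable amenable group G act by homeomorphisms on a zero-dimensional compact metric space X and let A, B ⊆ X be disjoint clopen sets. For any Følner sequence (F_n), the sequences inf_{x∈X} D_{F_n}(B_x), sup_{x∈X} D̄_{F_n}(B_x) and inf_{x∈X} D_{F_n}(B_x,A_x) converge (so the limsup and liminf in the definitions of the uniform densities are in fact limits), the limits are independent of the choice of the Følner sequence, and D(B) = sup_F inf_{x∈X} D_F(B_x), D̄(B) = inf_F sup_{x∈X} D̄_F(B_x), D(B,A) = sup_F inf_{x∈X} D_F(B_x,A_x), where F ranges over all finite subsets of G. -/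
/-!
STATEMENT 6 (Lemma `bbb` of the paper):
For an action of a countable amenable group `G` on a zero-dimensional compact metric
space `X` and disjoint clopen `A, B ⊆ X`, the sequences `inf_x D_{F_n}(B_x)`,
`sup_x D̄_{F_n}(B_x)` and `inf_x D_{F_n}(B_x, A_x)` converge along any Følner sequence,
the limits are independent of the Følner sequence, and equal
`sup_F inf_x D_F(B_x)`, `inf_F sup_x D̄_F(B_x)`, `sup_F inf_x D_F(B_x,A_x)` respectively.
Here `B_x = {g : g(x) ∈ B}`.
-/

open Filter Topology Pointwise

noncomputable def cnt {G : Type*} [Group G] (F : Finset G) (B : Set G) (g : G) : ℝ :=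
  ((B ∩ ((F : Set G) * {g})).ncard : ℝ) / F.card

noncomputable def lowD {G : Type*} [Group G] (F : Finset G) (B : Set G) : ℝ :=
  ⨅ g : G, cnt F B g

noncomputable def uppD {G : Type*} [Group G] (F : Finset G) (B : Set G) : ℝ :=
  ⨆ g : G, cnt F B g

noncomputable def advD {G : Type*} [Group G] (F : Finset G) (B A : Set G) : ℝ :=
  ⨅ g : G, (cnt F B g - cnt F A g)

def IsFolner {G : Type*} [Group G] (F : ℕ → Finset G) : Prop :=
  (∀ n, (F n).Nonempty) ∧
  ∀ g : G, Tendsto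
    (fun n => (((({g} : Set G) * (F n : Set G)) ∩ (F n : Set G)).ncard : ℝ) / (F n).card)
    atTop (𝓝 1)

/-- `A_x = {g ∈ G : g(x) ∈ A}`, the set of return times of the orbit of `x` to `A`. -/
def ret (G : Type*) [Group G] {X : Type*} [MulAction G X] (A : Set X) (x : X) : Set G :=
  {g : G | g • x ∈ A}

/-!
For bounded `f`, averaging the ergodic averages of `f` over `F` along `E` is the same as averaging
over `k ∈ F` the ergodic averages of `f` over the translates `k • E`. If `E` is almost invariant
under the elements of `F`, the latter are all close to the average over `E`; hence every average
over a far enough Følner set is at least `inf_x` of the average over `F`, up to a small error. So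
the sequence of infima is eventually above every value that the supremum over `F` exceeds, and it
never exceeds that supremum. The three densities are the cases `f = 1_B`, `f = -1_B` and
`f = 1_B - 1_A`.
-/

open scoped BigOperators Finset

section Order

variable {X α : Type*} (G : Type*) [Monoid G] [MulAction G X] [ConditionallyCompleteLattice α]
  {φ : X → α}

theorem ciInf_ciInf_smul (hφ : BddBelow (Set.range φ)) :
    ⨅ x, ⨅ g : G, φ (g • x) = ⨅ x, φ x := by
  have hbdd : BddBelow (Set.range fun p : X × G => φ (p.2 • p.1)) :=
    hφ.mono (Set.range_comp_subset_range _ φ)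
  have hsurj : Function.Surjective fun p : X × G => p.2 • p.1 :=
    fun x => ⟨(x, 1), one_smul G x⟩
  rw [← ciInf_prod hbdd]
  exact hsurj.iInf_comp φ

theorem ciSup_ciSup_smul (hφ : BddAbove (Set.range φ)) :
    ⨆ x, ⨆ g : G, φ (g • x) = ⨆ x, φ x :=
  ciInf_ciInf_smul (α := αᵒᵈ) G hφ

end Order

theorem real_iInf_neg {ι : Sort*} (f : ι → ℝ) : ⨅ i, -f i = -⨆ i, f i := by
  rw [iInf, iSup, ← Real.sInf_neg, Set.neg_range]

theorem abs_indicator_one_le_one {X : Type*} (B : Set X) (x : X) :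
    |B.indicator (1 : X → ℝ) x| ≤ 1 := by
  simpa using norm_indicator_le_norm_self (s := B) (1 : X → ℝ) x

theorem abs_indicator_one_sub_indicator_one_le_two {X : Type*} (A B : Set X) (x : X) :
    |(B.indicator 1 - A.indicator 1 : X → ℝ) x| ≤ 2 :=
  calc |(B.indicator 1 - A.indicator 1 : X → ℝ) x|
      ≤ |B.indicator (1 : X → ℝ) x| + |A.indicator (1 : X → ℝ) x| := abs_sub _ _
    _ ≤ 1 + 1 := add_le_add (abs_indicator_one_le_one B x) (abs_indicator_one_le_one A x)
    _ = 2 := one_add_one_eq_two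

theorem abs_expect_sub_expect_le {ι : Type*} [DecidableEq ι] {s t : Finset ι} {f : ι → ℝ} {C : ℝ}
    (hst : #s = #t) (hf : ∀ i, |f i| ≤ C) :
    |𝔼 i ∈ s, f i - 𝔼 i ∈ t, f i| ≤ 2 * C * (#(s \ t) / #t) := by
  have abs_sum_le (u : Finset ι) : |∑ i ∈ u, f i| ≤ #u * C :=
    (u.abs_sum_le_sum_abs f).trans <| by
      simpa only [nsmul_eq_mul] using u.sum_le_card_nsmul _ C fun i _ => hf i
  have hsum : |∑ i ∈ s, f i - ∑ i ∈ t, f i| ≤ 2 * C * #(s \ t) :=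
    calc |∑ i ∈ s, f i - ∑ i ∈ t, f i|
        = |∑ i ∈ s \ t, f i - ∑ i ∈ t \ s, f i| := by rw [Finset.sum_sdiff_sub_sum_sdiff]
      _ ≤ |∑ i ∈ s \ t, f i| + |∑ i ∈ t \ s, f i| := abs_sub _ _
      _ ≤ #(s \ t) * C + #(t \ s) * C := add_le_add (abs_sum_le _) (abs_sum_le _)
      _ = 2 * C * #(s \ t) := by rw [Finset.card_sdiff_comm hst]; ring
  rw [Finset.expect_eq_sum_div_card, Finset.expect_eq_sum_div_card, hst, ← sub_div, abs_div,
    Nat.abs_cast, ← mul_div_assoc]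
  gcongr

/-- The ergodic average of `f` at `x` over the finite set `F` of group elements; it is `0` for
`F = ∅`. -/
noncomputable def orbitAvg {G X : Type*} [SMul G X] (F : Finset G) (f : X → ℝ) (x : X) : ℝ :=
  𝔼 h ∈ F, f (h • x)

/-- The fraction of the translate `g • F` lying outside `F`, which measures how far `F` is from
being invariant under `g`. -/
noncomputable def translationDefect {G : Type*} [Group G] [DecidableEq G] (g : G)
    (F : Finset G) : ℝ :=
  #(g • F \ F) / #F

theorem translationDefect_eq_one_sub {G : Type*} [Group G] [DecidableEq G] (g : G)
    {F : Finset G} (hF : F.Nonempty) :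
    translationDefect g F = 1 - (({g} * (F : Set G) ∩ (F : Set G)).ncard : ℝ) / #F := by
  have hcard : (#F : ℝ) ≠ 0 := mod_cast hF.card_ne_zero
  have hinter : {g} * (F : Set G) ∩ (F : Set G) = ↑(g • F ∩ F) := by
    rw [Finset.coe_inter, Finset.coe_smul_finset, ← Set.singleton_smul, smul_eq_mul]
  have hsplit : (#(g • F \ F) : ℝ) + #(g • F ∩ F) = #F :=
    mod_cast (Finset.card_sdiff_add_card_inter _ _).trans (Finset.card_smul_finset g F)
  rw [hinter, Set.ncard_coe_finset, translationDefect, eq_sub_of_add_eq hsplit, sub_div,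
    div_self hcard]

section OrbitAvg

section SMul

variable {G X : Type*} [SMul G X] {f : X → ℝ} {C : ℝ}

theorem orbitAvg_neg (F : Finset G) (f : X → ℝ) (x : X) :
    orbitAvg F (-f) x = -orbitAvg F f x :=
  F.expect_neg_distrib _

theorem orbitAvg_sub (F : Finset G) (f₁ f₂ : X → ℝ) (x : X) :
    orbitAvg F (f₁ - f₂) x = orbitAvg F f₁ x - orbitAvg F f₂ x :=
  F.expect_sub_distrib _ _

theorem abs_orbitAvg_le (hf : ∀ x, |f x| ≤ C) (F : Finset G) (x : X) : |orbitAvg F f x| ≤ C := by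
  obtain rfl | hF := F.eq_empty_or_nonempty
  · simpa [orbitAvg] using (abs_nonneg _).trans (hf x)
  · exact (F.abs_expect_le _).trans (Finset.expect_le hF fun h _ => hf (h • x))

theorem bddBelow_range_orbitAvg (hf : ∀ x, |f x| ≤ C) (F : Finset G) :
    BddBelow (Set.range (orbitAvg F f)) :=
  ⟨-C, Set.forall_mem_range.2 fun x => neg_le_of_abs_le (abs_orbitAvg_le hf F x)⟩

theorem bddAbove_range_orbitAvg (hf : ∀ x, |f x| ≤ C) (F : Finset G) :
    BddAbove (Set.range (orbitAvg F f)) :=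
  ⟨C, Set.forall_mem_range.2 fun x => le_of_abs_le (abs_orbitAvg_le hf F x)⟩

theorem iInf_orbitAvg_le_of_abs_le [Nonempty X] (hf : ∀ x, |f x| ≤ C) (F : Finset G) :
    ⨅ x, orbitAvg F f x ≤ C :=
  ciInf_le_of_le (bddBelow_range_orbitAvg hf F) (Classical.arbitrary X)
    (le_of_abs_le (abs_orbitAvg_le hf F _))

end SMul

variable {G X : Type*} [Group G] [MulAction G X] {f : X → ℝ} {C : ℝ}

theorem orbitAvg_smul_finset [DecidableEq G] (g : G) (F : Finset G) (f : X → ℝ) (x : X) :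
    orbitAvg (g • F) f x = 𝔼 h ∈ F, f ((g * h) • x) :=
  Finset.expect_image (mul_right_injective g).injOn

theorem expect_orbitAvg_smul [DecidableEq G] (E F : Finset G) (f : X → ℝ) (x : X) :
    𝔼 h ∈ E, orbitAvg F f (h • x) = 𝔼 k ∈ F, orbitAvg (k • E) f x := by
  simp only [orbitAvg_smul_finset, mul_smul]
  exact Finset.expect_comm E F _

theorem abs_orbitAvg_smul_finset_sub_le [DecidableEq G] (hf : ∀ x, |f x| ≤ C) (g : G)
    (F : Finset G) (x : X) :
    |orbitAvg (g • F) f x - orbitAvg F f x| ≤ 2 * C * translationDefect g F :=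
  abs_expect_sub_expect_le (Finset.card_smul_finset g F) fun h => hf (h • x)

theorem iInf_orbitAvg_le_orbitAvg_add [DecidableEq G] (hf : ∀ x, |f x| ≤ C) {E F : Finset G}
    (hE : E.Nonempty) (hF : F.Nonempty) (x : X) :
    ⨅ y, orbitAvg F f y ≤ orbitAvg E f x + 2 * C * 𝔼 k ∈ F, translationDefect k E :=
  calc ⨅ y, orbitAvg F f y
      ≤ 𝔼 h ∈ E, orbitAvg F f (h • x) :=
        Finset.le_expect hE fun h _ => ciInf_le (bddBelow_range_orbitAvg hf F) (h • x)
    _ = 𝔼 k ∈ F, orbitAvg (k • E) f x := expect_orbitAvg_smul E F f x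
    _ ≤ 𝔼 k ∈ F, (orbitAvg E f x + 2 * C * translationDefect k E) :=
        Finset.expect_le_expect fun k _ => sub_le_iff_le_add'.1
          (le_of_abs_le (abs_orbitAvg_smul_finset_sub_le hf k E x))
    _ = orbitAvg E f x + 2 * C * 𝔼 k ∈ F, translationDefect k E := by
        rw [Finset.expect_add_distrib, Finset.expect_const hF, Finset.mul_expect]

end OrbitAvg

namespace IsFolner

variable {G X : Type*} [Group G] [MulAction G X] {Fs : ℕ → Finset G} {f : X → ℝ} {C : ℝ}

theorem tendsto_translationDefect [DecidableEq G] (hFs : IsFolner Fs) (g : G) :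
    Tendsto (fun n => translationDefect g (Fs n)) atTop (𝓝 0) := by
  simpa only [fun n => translationDefect_eq_one_sub g (hFs.1 n), sub_self] using
    (hFs.2 g).const_sub 1

theorem tendsto_expect_translationDefect [DecidableEq G] (hFs : IsFolner Fs) (F : Finset G) :
    Tendsto (fun n => 𝔼 k ∈ F, translationDefect k (Fs n)) atTop (𝓝 0) := by
  simpa only [Finset.expect_eq_sum_div_card, Finset.sum_const_zero, zero_div] using
    (tendsto_finsetSum F fun k _ => hFs.tendsto_translationDefect k).div_const (#F : ℝ)

theorem eventually_lt_iInf_orbitAvg [Nonempty X] (hFs : IsFolner Fs) (hf : ∀ x, |f x| ≤ C)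
    {F : Finset G} (hF : F.Nonempty) {a : ℝ} (ha : a < ⨅ x, orbitAvg F f x) :
    ∀ᶠ n in atTop, a < ⨅ x, orbitAvg (Fs n) f x := by
  classical
  have hlim : Tendsto (fun n => (⨅ x, orbitAvg F f x) -
      2 * C * 𝔼 k ∈ F, translationDefect k (Fs n)) atTop (𝓝 (⨅ x, orbitAvg F f x)) := by
    simpa only [mul_zero, sub_zero] using
      ((hFs.tendsto_expect_translationDefect F).const_mul (2 * C)).const_sub _
  filter_upwards [hlim.eventually_const_lt ha] with n hn
  exact hn.trans_le <| le_ciInf fun x =>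
    sub_le_iff_le_add.2 (iInf_orbitAvg_le_orbitAvg_add hf (hFs.1 n) hF x)

theorem tendsto_iInf_orbitAvg [Nonempty X] (hFs : IsFolner Fs) (hf : ∀ x, |f x| ≤ C) :
    Tendsto (fun n => ⨅ x, orbitAvg (Fs n) f x) atTop
      (𝓝 (⨆ F : {F : Finset G // F.Nonempty}, ⨅ x, orbitAvg F.1 f x)) := by
  have hbdd : BddAbove (Set.range fun F : {F : Finset G // F.Nonempty} =>
      ⨅ x, orbitAvg F.1 f x) :=
    ⟨C, Set.forall_mem_range.2 fun F => iInf_orbitAvg_le_of_abs_le hf F.1⟩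
  have : Nonempty {F : Finset G // F.Nonempty} := ⟨⟨Fs 0, hFs.1 0⟩⟩
  refine tendsto_order.2 ⟨fun a ha => ?_, fun a ha => .of_forall fun n => ?_⟩
  · obtain ⟨F, hF⟩ := exists_lt_of_lt_ciSup ha
    exact hFs.eventually_lt_iInf_orbitAvg hf F.2 hF
  · exact (le_ciSup hbdd ⟨Fs n, hFs.1 n⟩).trans_lt ha

theorem tendsto_iSup_orbitAvg [Nonempty X] (hFs : IsFolner Fs) (hf : ∀ x, |f x| ≤ C) :
    Tendsto (fun n => ⨆ x, orbitAvg (Fs n) f x) atTop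
      (𝓝 (⨅ F : {F : Finset G // F.Nonempty}, ⨆ x, orbitAvg F.1 f x)) := by
  have hneg : ∀ x, |(-f) x| ≤ C := fun x => (abs_neg (f x)).trans_le (hf x)
  have iSup_eq (F : Finset G) : ⨆ x, orbitAvg F f x = -⨅ x, orbitAvg F (-f) x := by
    simp only [orbitAvg_neg, real_iInf_neg, neg_neg]
  simpa only [iSup_eq, real_iInf_neg] using (hFs.tendsto_iInf_orbitAvg hneg).neg

end IsFolner

section ReturnTimes

variable {G X : Type*} [Group G] [MulAction G X]

theorem ret_inter_mul_singleton (B : Set X) (x : X) (F : Finset G) (g : G)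
    [DecidablePred fun h : G => h • g • x ∈ B] :
    ret G B x ∩ ((F : Set G) * {g}) = (· * g) '' ↑{h ∈ F | h • g • x ∈ B} := by
  rw [Set.mul_singleton, Set.inter_comm, ← Set.image_inter_preimage, Finset.coe_filter]
  simp only [smul_smul]
  rfl

theorem cnt_ret (F : Finset G) (B : Set X) (x : X) (g : G) :
    cnt F (ret G B x) g = orbitAvg F (B.indicator 1) (g • x) := by
  classical
  rw [cnt, ret_inter_mul_singleton, Set.ncard_image_of_injective _ (mul_left_injective g),
    Set.ncard_coe_finset, orbitAvg, Finset.expect_eq_sum_div_card]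
  simp only [Set.indicator_apply, Pi.one_apply, Finset.sum_boole]

theorem iInf_lowD_ret (F : Finset G) (B : Set X) :
    ⨅ x, lowD F (ret G B x) = ⨅ x, orbitAvg F (B.indicator 1) x := by
  simp only [lowD, cnt_ret]
  exact ciInf_ciInf_smul G (bddBelow_range_orbitAvg (abs_indicator_one_le_one B) F)

theorem iSup_uppD_ret (F : Finset G) (B : Set X) :
    ⨆ x, uppD F (ret G B x) = ⨆ x, orbitAvg F (B.indicator 1) x := by
  simp only [uppD, cnt_ret]
  exact ciSup_ciSup_smul G (bddAbove_range_orbitAvg (abs_indicator_one_le_one B) F)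

theorem iInf_advD_ret (F : Finset G) (A B : Set X) :
    ⨅ x, advD F (ret G B x) (ret G A x) =
      ⨅ x, orbitAvg F (B.indicator 1 - A.indicator 1) x := by
  simp only [advD, cnt_ret, ← orbitAvg_sub]
  exact ciInf_ciInf_smul G
    (bddBelow_range_orbitAvg (abs_indicator_one_sub_indicator_one_le_two A B) F)

end ReturnTimes

theorem stmt6_general {G X : Type*} [Group G] [MulAction G X] [Nonempty X] (A B : Set X)
    {Fs : ℕ → Finset G} (hFs : IsFolner Fs) :
    Tendsto (fun n => ⨅ x : X, lowD (Fs n) (ret G B x)) atTop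
      (𝓝 (⨆ F : {F : Finset G // F.Nonempty}, ⨅ x : X, lowD F.1 (ret G B x))) ∧
    Tendsto (fun n => ⨆ x : X, uppD (Fs n) (ret G B x)) atTop
      (𝓝 (⨅ F : {F : Finset G // F.Nonempty}, ⨆ x : X, uppD F.1 (ret G B x))) ∧
    Tendsto (fun n => ⨅ x : X, advD (Fs n) (ret G B x) (ret G A x)) atTop
      (𝓝 (⨆ F : {F : Finset G // F.Nonempty},
        ⨅ x : X, advD F.1 (ret G B x) (ret G A x))) := by
  simp only [iInf_lowD_ret, iSup_uppD_ret, iInf_advD_ret]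
  exact ⟨hFs.tendsto_iInf_orbitAvg (abs_indicator_one_le_one B),
    hFs.tendsto_iSup_orbitAvg (abs_indicator_one_le_one B),
    hFs.tendsto_iInf_orbitAvg (abs_indicator_one_sub_indicator_one_le_two A B)⟩

theorem stmt6 (G : Type*) [Group G] [Countable G]
    (X : Type*) [TopologicalSpace X] [CompactSpace X] [TopologicalSpace.MetrizableSpace X]
    [TotallyDisconnectedSpace X] [Nonempty X]
    [MulAction G X] [ContinuousConstSMul G X]
    (A B : Set X) (hA : IsClopen A) (hB : IsClopen B) (hAB : Disjoint A B)
    (Fs : ℕ → Finset G) (hFs : IsFolner Fs) :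
    Tendsto (fun n => ⨅ x : X, lowD (Fs n) (ret G B x)) atTop
      (𝓝 (⨆ F : {F : Finset G // F.Nonempty}, ⨅ x : X, lowD F.1 (ret G B x))) ∧
    Tendsto (fun n => ⨆ x : X, uppD (Fs n) (ret G B x)) atTop
      (𝓝 (⨅ F : {F : Finset G // F.Nonempty}, ⨆ x : X, uppD F.1 (ret G B x))) ∧
    Tendsto (fun n => ⨅ x : X, advD (Fs n) (ret G B x) (ret G A x)) atTop
      (𝓝 (⨆ F : {F : Finset G // F.Nonempty},
        ⨅ x : X, advD F.1 (ret G B x) (ret G A x))) :=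
  stmt6_general A B hFs
end

section
/- Let G be a countable amenable group and let A, B ⊆ G be disjoint. In the subshift Y^{AB} associated with A, B, one has inf_{μ∈M^{AB}} μ([2]) = D(B), sup_{μ∈M^{AB}} μ([2]) = D̄(B), and inf_{μ∈M^{AB}} (μ([2]) − μ([1])) = D(B,A), where M^{AB} is the set of shift-invariant Borel probability measures on Y^{AB}. -/
/-!
STATEMENT 8 (Proposition `prop` (2) of the paper):
For disjoint `A, B ⊆ G`, in the subshift `Y^{AB}` associated with `A, B` one has
`inf_μ μ([2]) = D(B)`, `sup_μ μ([2]) = D̄(B)` and `inf_μ (μ([2]) − μ([1])) = D(B,A)`,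
where `μ` ranges over the shift-invariant Borel probability measures concentrated on
`Y^{AB}`, and `D, D̄` are the Banach densities along a Følner sequence.
-/

open Filter Topology Pointwise MeasureTheory
open scoped Classical

/-- The shift action of `G` on `Λ^G`: `(h(x))_g = x_{gh}`. -/
def shiftMap {G : Type*} [Group G] {Λ : Type*} (h : G) (x : G → Λ) : G → Λ :=
  fun g => x (g * h)

/-- The point `y^{AB} ∈ {0,1,2}^G` determined by disjoint sets `A, B ⊆ G`. -/
noncomputable def yab {G : Type*} [Group G] (A B : Set G) : G → Fin 3 :=
  fun g => if g ∈ A then 1 else if g ∈ B then 2 else 0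

/-- The subshift `Y^{AB}`: the closure of the shift-orbit of `y^{AB}`. -/
noncomputable def Yab {G : Type*} [Group G] (A B : Set G) : Set (G → Fin 3) :=
  closure (Set.range fun h : G => shiftMap h (yab A B))

/-!
Averaging `φ` over `F` does not change its integral against an invariant measure, and the average
is a continuous function, so its infimum over the orbit of `x` bounds from below its integral
against every measure carried by the orbit closure: `⨅ g, 𝔼 f ∈ F, φ (f • g • x) ≤ ∫ φ ∂μ`.
Conversely, let `gₙ` almost attain the infimum for `Fₙ`. By the Følner property, every limit of the
empirical measures of the points `f • gₙ • x`, `f ∈ Fₙ`, is an invariant measure, and it integrates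
`φ` to the limit of the infima. Hence the infima converge to `⨅ μ, ∫ φ ∂μ`. The theorem is the case
of the shift and of indicators of cylinders.
-/

open scoped BigOperators BoundedContinuousFunction

lemma iSup_eq_neg_iInf_neg {ι : Sort*} (u : ι → ℝ) : ⨆ i, u i = -⨅ i, -u i := by
  rw [iInf, iSup, ← Real.sSup_neg]
  congr 1
  ext r
  simp [neg_eq_iff_eq_neg]

lemma toReal_measure_inter_eq_integral_indicator {X : Type*} [MeasurableSpace X] {μ : Measure X}
    [IsProbabilityMeasure μ] {s t : Set X} (hs : MeasurableSet s) (ht : MeasurableSet t)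
    (hμt : μ t = 1) : (μ (s ∩ t)).toReal = ∫ x, s.indicator 1 x ∂μ := by
  rw [integral_indicator_one hs, measureReal_def,
    measure_inter_conull ((prob_compl_eq_zero_iff ht).2 hμt)]

section Folner

variable {G : Type*} [Group G]

lemma abs_sum_sub_sum_le {α : Type*} (S T : Finset α) {ψ : α → ℝ} {C : ℝ}
    (hψ : ∀ a, |ψ a| ≤ C) :
    |∑ a ∈ S, ψ a - ∑ a ∈ T, ψ a| ≤ ((S \ T).card + (T \ S).card) * C := by
  have abs_sum_le (R : Finset α) : |∑ a ∈ R, ψ a| ≤ R.card * C := by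
    simpa using (Finset.abs_sum_le_sum_abs ψ R).trans
      (Finset.sum_le_card_nsmul R _ C fun a _ => hψ a)
  calc |∑ a ∈ S, ψ a - ∑ a ∈ T, ψ a|
      = |∑ a ∈ S \ T, ψ a - ∑ a ∈ T \ S, ψ a| := by rw [Finset.sum_sdiff_sub_sum_sdiff]
    _ ≤ |∑ a ∈ S \ T, ψ a| + |∑ a ∈ T \ S, ψ a| := abs_sub _ _
    _ ≤ (S \ T).card * C + (T \ S).card * C := add_le_add (abs_sum_le _) (abs_sum_le _)
    _ = ((S \ T).card + (T \ S).card) * C := by ring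

lemma abs_sum_mul_left_sub_sum_le (F : Finset G) (h : G) {ψ : G → ℝ} {C : ℝ}
    (hψ : ∀ g, |ψ g| ≤ C) :
    |∑ f ∈ F, ψ (h * f) - ∑ f ∈ F, ψ f| ≤
      2 * C * (F.card - ((({h} : Set G) * (F : Set G)) ∩ (F : Set G)).ncard) := by
  have card_smul : (h • F).card = F.card := Finset.card_smul_finset h F
  have card_inter : ((({h} : Set G) * (F : Set G)) ∩ (F : Set G)).ncard = (h • F ∩ F).card := by
    rw [← Set.ncard_coe_finset, Finset.coe_inter, Finset.coe_smul_finset, Set.singleton_mul]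
    rfl
  have sum_smul : ∑ f ∈ F, ψ (h * f) = ∑ f ∈ h • F, ψ f :=
    (Finset.sum_image (mul_right_injective h).injOn).symm
  have card_left : ((h • F ∩ F).card : ℝ) + (h • F \ F).card = F.card := by
    rw [← card_smul]
    exact_mod_cast Finset.card_inter_add_card_sdiff (h • F) F
  have card_right : ((h • F ∩ F).card : ℝ) + (F \ h • F).card = F.card := by
    rw [Finset.inter_comm]
    exact_mod_cast Finset.card_inter_add_card_sdiff F (h • F)
  rw [sum_smul, card_inter]
  refine (abs_sum_sub_sum_le _ _ hψ).trans_eq ?_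
  rw [eq_sub_of_add_eq' card_left, eq_sub_of_add_eq' card_right]
  ring

lemma abs_expect_mul_left_sub_expect_le {F : Finset G} (hF : F.Nonempty) (h : G) {ψ : G → ℝ}
    {C : ℝ} (hψ : ∀ g, |ψ g| ≤ C) :
    |𝔼 f ∈ F, ψ (h * f) - 𝔼 f ∈ F, ψ f| ≤
      2 * C * (1 - ((({h} : Set G) * (F : Set G)) ∩ (F : Set G)).ncard / F.card) := by
  have card_pos : (0 : ℝ) < F.card := by exact_mod_cast hF.card_pos
  rw [Finset.expect_eq_sum_div_card, Finset.expect_eq_sum_div_card, ← sub_div, abs_div,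
    abs_of_pos card_pos, div_le_iff₀ card_pos]
  refine (abs_sum_mul_left_sub_sum_le F h hψ).trans_eq ?_
  field_simp

lemma IsFolner.tendsto_expect_mul_left_sub_expect {F : ℕ → Finset G} (hF : IsFolner F) (h : G)
    {ψ : ℕ → G → ℝ} {C : ℝ} (hψ : ∀ n g, |ψ n g| ≤ C) :
    Tendsto (fun n => 𝔼 f ∈ F n, ψ n (h * f) - 𝔼 f ∈ F n, ψ n f) atTop (𝓝 0) := by
  refine squeeze_zero_norm
    (fun n => abs_expect_mul_left_sub_expect_le (hF.1 n) h (hψ n)) ?_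
  simpa using ((hF.2 h).const_sub 1).const_mul (2 * C)

end Folner

section EmpiricalMeasure

variable {G X : Type*} [SMul G X] [MeasurableSpace X]

/-- The uniform distribution on the points `f • x` for `f ∈ F`, counted with multiplicity. -/
noncomputable def empiricalMeasure (F : Finset G) (x : X) : Measure X :=
  (F.card : ENNReal)⁻¹ • ∑ f ∈ F, Measure.dirac (f • x)

lemma empiricalMeasure_eq_one {F : Finset G} (hF : F.Nonempty) {x : X} {s : Set X}
    (hs : ∀ f ∈ F, f • x ∈ s) : empiricalMeasure F x s = 1 := by
  have dirac_eq_one : ∀ f ∈ F, Measure.dirac (f • x) s = 1 := fun f hf =>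
    Measure.dirac_apply_of_mem (hs f hf)
  rw [empiricalMeasure, Measure.smul_apply, Measure.finsetSum_apply,
    Finset.sum_congr rfl dirac_eq_one]
  simpa using ENNReal.inv_mul_cancel (by simpa using hF.ne_empty) (by simp)

lemma isProbabilityMeasure_empiricalMeasure {F : Finset G} (hF : F.Nonempty) (x : X) :
    IsProbabilityMeasure (empiricalMeasure F x) :=
  ⟨empiricalMeasure_eq_one hF fun _ _ => Set.mem_univ _⟩

lemma integral_empiricalMeasure [MeasurableSingletonClass X] (F : Finset G) (x : X)
    (φ : X → ℝ) : ∫ y, φ y ∂empiricalMeasure F x = 𝔼 f ∈ F, φ (f • x) := by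
  rw [empiricalMeasure, integral_smul_measure,
    integral_finsetSum_measure fun _ _ => integrable_dirac (by simp),
    Finset.expect_eq_sum_div_card]
  simp [div_eq_inv_mul]

end EmpiricalMeasure

/-- `μ` is a `G`-invariant probability measure carried by `Y`. It is a conjunction rather than a
structure so that it unfolds to the condition imposed on `μ` in the theorem. -/
def IsInvariantProbOn (G : Type*) {X : Type*} [SMul G X] [MeasurableSpace X] (Y : Set X)
    (μ : Measure X) : Prop :=
  IsProbabilityMeasure μ ∧ μ Y = 1 ∧ ∀ g : G, μ.map (fun x => g • x) = μ

/-- The type of `G`-invariant probability measures carried by `Y`; for the shift on `Y^{AB}` this is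
`M^{AB}`. -/
abbrev InvariantProbOn (G : Type*) {X : Type*} [SMul G X] [MeasurableSpace X] (Y : Set X) :
    Type _ :=
  {μ : Measure X // IsInvariantProbOn G Y μ}

/-- The closure of the orbit of `x`; for the shift and `x = y^{AB}` this is `Y^{AB}`. -/
abbrev orbitClosure (G : Type*) {X : Type*} [Monoid G] [MulAction G X] [TopologicalSpace X]
    (x : X) : Set X :=
  closure (MulAction.orbit G x)

section Dynamics

variable {G X : Type*} [Group G] [MulAction G X] [TopologicalSpace X]
  {F : ℕ → Finset G} {φ : X → ℝ}

lemma bddBelow_range_expect_smul [CompactSpace X] {S : Finset G}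
    (hS : S.Nonempty) (hφ : Continuous φ) (x : X) :
    BddBelow (Set.range fun g : G => 𝔼 f ∈ S, φ (f • g • x)) := by
  obtain ⟨c, hc⟩ := (isCompact_range hφ).bddBelow
  refine ⟨c, ?_⟩
  rintro _ ⟨g, rfl⟩
  exact Finset.le_expect hS fun f _ => hc ⟨f • g • x, rfl⟩

variable [ContinuousConstSMul G X]

lemma continuous_expect_smul (S : Finset G) (hφ : Continuous φ) :
    Continuous fun y : X => 𝔼 f ∈ S, φ (f • y) := by
  simp only [Finset.expect_eq_sum_div_card]
  fun_prop

lemma IsFolner.map_smul_eq_of_tendsto_expect [MeasurableSpace X] [BorelSpace X]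
    [HasOuterApproxClosed X] {μ : Measure X} [IsFiniteMeasure μ] {l : Filter ℕ} [l.NeBot]
    (hF : IsFolner F) (hl : l ≤ atTop) {x : ℕ → X}
    (hμ : ∀ φ : X →ᵇ ℝ, Tendsto (fun n => 𝔼 f ∈ F n, φ (f • x n)) l (𝓝 (∫ y, φ y ∂μ))) (g : G) :
    μ.map (fun y => g • y) = μ := by
  refine ext_of_forall_integral_eq_of_IsFiniteMeasure fun φ => ?_
  rw [integral_map (continuous_const_smul g).measurable.aemeasurable
    φ.continuous.aestronglyMeasurable]
  have tendsto_sub := (hμ (φ.compContinuous ⟨_, continuous_const_smul g⟩)).sub (hμ φ)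
  have tendsto_zero := hF.tendsto_expect_mul_left_sub_expect g
    (ψ := fun n f => φ (f • x n)) fun n f => φ.norm_coe_le_norm (f • x n)
  simp only [mul_smul] at tendsto_zero
  exact sub_eq_zero.1 (tendsto_nhds_unique tendsto_sub (tendsto_zero.mono_left hl))

variable [CompactSpace X]

lemma iInf_expect_smul_le_of_mem_orbitClosure {S : Finset G} (hS : S.Nonempty)
    (hφ : Continuous φ) {x y : X} (hy : y ∈ orbitClosure G x) :
    ⨅ g : G, 𝔼 f ∈ S, φ (f • g • x) ≤ 𝔼 f ∈ S, φ (f • y) := by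
  refine closure_minimal ?_ (isClosed_le continuous_const (continuous_expect_smul S hφ)) hy
  rintro _ ⟨g, rfl⟩
  exact ciInf_le (bddBelow_range_expect_smul hS hφ x) g

variable [MeasurableSpace X] [BorelSpace X] {Y : Set X} {μ : Measure X}

lemma integral_expect_smul_of_map_smul_eq [IsFiniteMeasure μ]
    (hμ : ∀ g : G, μ.map (fun x => g • x) = μ) {S : Finset G} (hS : S.Nonempty)
    (hφ : Continuous φ) : ∫ y, 𝔼 f ∈ S, φ (f • y) ∂μ = ∫ y, φ y ∂μ := by
  have integrable_smul (f : G) : Integrable (fun y => φ (f • y)) μ :=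
    (hφ.comp (continuous_const_smul f)).integrable_of_hasCompactSupport (.of_compactSpace _)
  have integral_smul_eq (f : G) : ∫ y, φ (f • y) ∂μ = ∫ y, φ y ∂μ := by
    conv_rhs => rw [← hμ f]
    exact (integral_map (continuous_const_smul f).measurable.aemeasurable
      hφ.aestronglyMeasurable).symm
  simp only [Finset.expect_eq_sum_div_card]
  rw [integral_div, integral_finsetSum S fun f _ => integrable_smul f]
  simp only [integral_smul_eq]
  rw [← Finset.expect_eq_sum_div_card, Finset.expect_const hS]

lemma iInf_expect_smul_le_integral {x : X}
    (hμ : IsInvariantProbOn G (orbitClosure G x) μ) {S : Finset G}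
    (hS : S.Nonempty) (hφ : Continuous φ) :
    ⨅ g : G, 𝔼 f ∈ S, φ (f • g • x) ≤ ∫ y, φ y ∂μ := by
  obtain ⟨_, hsupp, hinv⟩ := hμ
  have ae_mem : ∀ᵐ y ∂μ, y ∈ orbitClosure G x :=
    (mem_ae_iff_prob_eq_one isClosed_closure.measurableSet).2 hsupp
  calc ⨅ g : G, 𝔼 f ∈ S, φ (f • g • x)
      = ∫ _, ⨅ g : G, 𝔼 f ∈ S, φ (f • g • x) ∂μ := by simp
    _ ≤ ∫ y, 𝔼 f ∈ S, φ (f • y) ∂μ :=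
      integral_mono_ae (integrable_const _)
        ((continuous_expect_smul S hφ).integrable_of_hasCompactSupport (.of_compactSpace _))
        (ae_mem.mono fun _ => iInf_expect_smul_le_of_mem_orbitClosure hS hφ)
    _ = ∫ y, φ y ∂μ := integral_expect_smul_of_map_smul_eq hinv hS hφ

variable [TopologicalSpace.MetrizableSpace X]

/-- A form of the Krylov–Bogolyubov theorem. -/
lemma IsFolner.exists_isInvariantProbOn_tendsto_expect (hF : IsFolner F) {U : Ultrafilter ℕ}
    (hU : (U : Filter ℕ) ≤ atTop) (hY : IsClosed Y) {x : ℕ → X} (hx : ∀ n, ∀ g : G, g • x n ∈ Y) :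
    ∃ μ : Measure X, IsInvariantProbOn G Y μ ∧ ∀ φ : X →ᵇ ℝ,
      Tendsto (fun n => 𝔼 f ∈ F n, φ (f • x n)) U (𝓝 (∫ y, φ y ∂μ)) := by
  let ν : ℕ → ProbabilityMeasure X := fun n =>
    ⟨empiricalMeasure (F n) (x n), isProbabilityMeasure_empiricalMeasure (hF.1 n) (x n)⟩
  obtain ⟨μ, -, hμ⟩ := isCompact_univ.ultrafilter_le_nhds (U.map ν) (by simp)
  have tendsto_ν : Tendsto ν U (𝓝 μ) := hμ
  have tendsto_expect (φ : X →ᵇ ℝ) :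
      Tendsto (fun n => 𝔼 f ∈ F n, φ (f • x n)) U (𝓝 (∫ y, φ y ∂(μ : Measure X))) := by
    simpa [ν, integral_empiricalMeasure] using
      ProbabilityMeasure.tendsto_iff_forall_integral_tendsto.1 tendsto_ν φ
  have ν_eq_one (n : ℕ) : (ν n : Measure X) Y = 1 :=
    empiricalMeasure_eq_one (hF.1 n) fun f _ => hx n f
  have μ_eq_one : (μ : Measure X) Y = 1 := by
    refine le_antisymm prob_le_one ?_
    simpa [ν_eq_one] using ProbabilityMeasure.limsup_measure_closed_le_of_tendsto tendsto_ν hY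
  exact ⟨μ, ⟨inferInstance, μ_eq_one, hF.map_smul_eq_of_tendsto_expect hU tendsto_expect⟩,
    tendsto_expect⟩

theorem IsFolner.tendsto_iInf_expect_smul (hF : IsFolner F) (hφ : Continuous φ) (x : X) :
    Tendsto (fun n => ⨅ g : G, 𝔼 f ∈ F n, φ (f • g • x)) atTop
      (𝓝 (⨅ μ : InvariantProbOn G (orbitClosure G x), ∫ y, φ y ∂μ.1)) := by
  have exists_near_minimizer (n : ℕ) : ∃ g : G, 𝔼 f ∈ F n, φ (f • g • x) <
      (⨅ g : G, 𝔼 f ∈ F n, φ (f • g • x)) + 1 / ((n : ℝ) + 1) :=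
    exists_lt_of_ciInf_lt (lt_add_of_pos_right _ (by positivity))
  choose g hg using exists_near_minimizer
  refine (tendsto_iff_ultrafilter _ _ _).2 fun U hU => ?_
  obtain ⟨μ, hμ, tendsto_of_bounded⟩ := hF.exists_isInvariantProbOn_tendsto_expect hU
    (Y := orbitClosure G x) isClosed_closure (x := fun n => g n • x)
    fun n h => subset_closure ⟨h * g n, mul_smul _ _ _⟩
  have : Nonempty (InvariantProbOn G (orbitClosure G x)) := ⟨μ, hμ⟩
  have tendsto_expect : Tendsto (fun n => 𝔼 f ∈ F n, φ (f • g n • x)) U (𝓝 (∫ y, φ y ∂μ)) :=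
    tendsto_of_bounded (.mkOfCompact ⟨φ, hφ⟩)
  have tendsto_integral : Tendsto (fun n => ⨅ g : G, 𝔼 f ∈ F n, φ (f • g • x)) U
      (𝓝 (∫ y, φ y ∂μ)) := by
    have tendsto_lower := tendsto_expect.sub
      (tendsto_one_div_add_atTop_nhds_zero_nat.mono_left hU)
    rw [sub_zero] at tendsto_lower
    exact tendsto_of_tendsto_of_tendsto_of_le_of_le tendsto_lower tendsto_expect
      (fun n => (sub_lt_iff_lt_add.2 (hg n)).le)
      (fun n => ciInf_le (bddBelow_range_expect_smul (hF.1 n) hφ x) (g n))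
  convert tendsto_integral
  refine le_antisymm (ciInf_le ?_ (⟨μ, hμ⟩ : InvariantProbOn G (orbitClosure G x))) ?_
  · exact ⟨_, Set.forall_mem_range.2 fun μ => iInf_expect_smul_le_integral μ.2 (hF.1 0) hφ⟩
  · exact le_of_tendsto' tendsto_integral fun n =>
      le_ciInf fun μ => iInf_expect_smul_le_integral μ.2 (hF.1 n) hφ

theorem IsFolner.tendsto_iSup_expect_smul (hF : IsFolner F) (hφ : Continuous φ) (x : X) :
    Tendsto (fun n => ⨆ g : G, 𝔼 f ∈ F n, φ (f • g • x)) atTop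
      (𝓝 (⨆ μ : InvariantProbOn G (orbitClosure G x), ∫ y, φ y ∂μ.1)) := by
  simpa only [iSup_eq_neg_iInf_neg, Pi.neg_apply, Finset.expect_neg_distrib, integral_neg] using
    (hF.tendsto_iInf_expect_smul hφ.neg x).neg

end Dynamics

section Shift

variable {G Λ : Type*} [Group G]

/-- The shift, as an action of `G` on `Λ^G`. It is not a global instance, because `G → Λ` inherits
another action from `Λ` when `G` acts on `Λ`. -/
@[reducible] def shiftAction (G Λ : Type*) [Group G] : MulAction G (G → Λ) where
  smul := shiftMap
  one_smul y := funext fun g => congrArg y (mul_one g)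
  mul_smul h k y := funext fun g => congrArg y (mul_assoc g h k).symm

attribute [local instance] shiftAction

/-- The cylinder `[a]` of configurations whose letter at the identity is `a`. -/
def letterCylinder (G : Type*) {Λ : Type*} [One G] (a : Λ) : Set (G → Λ) :=
  {y | y 1 = a}

lemma cnt_eq_expect_indicator (F : Finset G) (S : Set G) (g : G) :
    cnt F S g = 𝔼 f ∈ F, S.indicator (1 : G → ℝ) (f * g) := by
  have inter_eq : S ∩ ((F : Set G) * {g}) = ↑((F.filter (· * g ∈ S)).image (· * g)) := by
    ext x
    simp only [Set.mul_singleton, Set.mem_inter_iff, Set.mem_image, Finset.mem_coe,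
      Finset.mem_image, Finset.mem_filter]
    grind
  rw [cnt, inter_eq, Set.ncard_coe_finset,
    Finset.card_image_of_injective _ (mul_left_injective g), Finset.expect_eq_sum_div_card]
  simp [Set.indicator_apply]

lemma cnt_preimage_singleton_eq_expect (F : Finset G) (y : G → Λ) (a : Λ) (g : G) :
    cnt F (y ⁻¹' {a}) g =
      𝔼 f ∈ F, (letterCylinder G a).indicator (1 : (G → Λ) → ℝ) (f • g • y) := by
  rw [cnt_eq_expect_indicator]
  refine Finset.expect_congr rfl fun f _ => ?_
  have smul_apply_one : (f • g • y) 1 = y (f * g) := congrArg y (by rw [one_mul])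
  simp [Set.indicator_apply, letterCylinder, smul_apply_one]

variable [TopologicalSpace Λ]

lemma continuousConstSMul_shiftAction : ContinuousConstSMul G (G → Λ) where
  continuous_const_smul h := continuous_pi fun g => continuous_apply (g * h)

attribute [local instance] continuousConstSMul_shiftAction

variable [DiscreteTopology Λ]

lemma isClopen_letterCylinder (a : Λ) : IsClopen (letterCylinder G a) :=
  (isClopen_discrete {a}).preimage (continuous_apply 1)

lemma continuous_indicator_letterCylinder (a : Λ) :
    Continuous ((letterCylinder G a).indicator (1 : (G → Λ) → ℝ)) :=
  (isClopen_letterCylinder a).continuous_indicator continuous_one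

variable [Countable G] [Finite Λ] [MeasurableSpace Λ] [BorelSpace Λ] {F : ℕ → Finset G}

lemma integrable_indicator_letterCylinder {μ : Measure (G → Λ)} [IsFiniteMeasure μ] (a : Λ) :
    Integrable ((letterCylinder G a).indicator (1 : (G → Λ) → ℝ)) μ :=
  (continuous_indicator_letterCylinder a).integrable_of_hasCompactSupport (.of_compactSpace _)

theorem stmt8_general (hF : IsFolner F) (y : G → Λ) (a b : Λ) :
    ((⨅ μ : InvariantProbOn G (orbitClosure G y),
        (μ.1 (letterCylinder G a ∩ orbitClosure G y)).toReal)
      = limsup (fun n => lowD (F n) (y ⁻¹' {a})) atTop) ∧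
    ((⨆ μ : InvariantProbOn G (orbitClosure G y),
        (μ.1 (letterCylinder G a ∩ orbitClosure G y)).toReal)
      = liminf (fun n => uppD (F n) (y ⁻¹' {a})) atTop) ∧
    ((⨅ μ : InvariantProbOn G (orbitClosure G y),
        ((μ.1 (letterCylinder G a ∩ orbitClosure G y)).toReal
          - (μ.1 (letterCylinder G b ∩ orbitClosure G y)).toReal))
      = limsup (fun n => advD (F n) (y ⁻¹' {a}) (y ⁻¹' {b})) atTop) := by
  have measure_eq_integral (c : Λ) (μ : InvariantProbOn G (orbitClosure G y)) :
      (μ.1 (letterCylinder G c ∩ orbitClosure G y)).toReal =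
        ∫ z, (letterCylinder G c).indicator 1 z ∂μ.1 :=
    have := μ.2.1
    toReal_measure_inter_eq_integral_indicator (isClopen_letterCylinder c).isOpen.measurableSet
      isClosed_closure.measurableSet μ.2.2.1
  have integral_sub_eq (μ : InvariantProbOn G (orbitClosure G y)) :
      ∫ z, ((letterCylinder G a).indicator 1 z - (letterCylinder G b).indicator 1 z : ℝ) ∂μ.1 =
        ∫ z, (letterCylinder G a).indicator 1 z ∂μ.1 -
          ∫ z, (letterCylinder G b).indicator 1 z ∂μ.1 :=
    have := μ.2.1
    integral_sub (integrable_indicator_letterCylinder a) (integrable_indicator_letterCylinder b)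
  have hφ (c : Λ) := continuous_indicator_letterCylinder (G := G) c
  simp only [measure_eq_integral, ← integral_sub_eq, lowD, uppD, advD,
    cnt_preimage_singleton_eq_expect, ← Finset.expect_sub_distrib]
  exact ⟨(hF.tendsto_iInf_expect_smul (hφ a) y).limsup_eq.symm,
    (hF.tendsto_iSup_expect_smul (hφ a) y).liminf_eq.symm,
    (hF.tendsto_iInf_expect_smul ((hφ a).sub (hφ b)) y).limsup_eq.symm⟩

end Shift

lemma yab_preimage_one {G : Type*} [Group G] (A B : Set G) : yab A B ⁻¹' {1} = A := by
  ext g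
  simp only [yab, Set.mem_preimage, Set.mem_singleton_iff]
  split_ifs <;> simp_all

lemma yab_preimage_two {G : Type*} [Group G] {A B : Set G} (hAB : Disjoint A B) :
    yab A B ⁻¹' {2} = B := by
  ext g
  have notMem_of_mem : g ∈ A → g ∉ B := fun hA => Set.disjoint_left.1 hAB hA
  simp only [yab, Set.mem_preimage, Set.mem_singleton_iff]
  split_ifs <;> simp_all

theorem stmt8 {G : Type*} [Group G] [Countable G]
    (Fs : ℕ → Finset G) (hFs : IsFolner Fs)
    (A B : Set G) (hAB : Disjoint A B) :
    ((⨅ μ : {μ : Measure (G → Fin 3) // IsProbabilityMeasure μ ∧ μ (Yab A B) = 1 ∧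
        ∀ h : G, μ.map (shiftMap h) = μ},
        (μ.1 ({y : G → Fin 3 | y 1 = 2} ∩ Yab A B)).toReal)
      = limsup (fun n => lowD (Fs n) B) atTop) ∧
    ((⨆ μ : {μ : Measure (G → Fin 3) // IsProbabilityMeasure μ ∧ μ (Yab A B) = 1 ∧
        ∀ h : G, μ.map (shiftMap h) = μ},
        (μ.1 ({y : G → Fin 3 | y 1 = 2} ∩ Yab A B)).toReal)
      = liminf (fun n => uppD (Fs n) B) atTop) ∧
    ((⨅ μ : {μ : Measure (G → Fin 3) // IsProbabilityMeasure μ ∧ μ (Yab A B) = 1 ∧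
        ∀ h : G, μ.map (shiftMap h) = μ},
        ((μ.1 ({y : G → Fin 3 | y 1 = 2} ∩ Yab A B)).toReal
          - (μ.1 ({y : G → Fin 3 | y 1 = 1} ∩ Yab A B)).toReal))
      = limsup (fun n => advD (Fs n) B A) atTop) := by
  have densities := stmt8_general hFs (yab A B) 2 1
  rwa [yab_preimage_one, yab_preimage_two hAB] at densities
end

section
/- Let G be a countable group, let X ⊆ Λ^G be a subshift over a finite alphabet Λ which is transitive with transitive point x* (i.e. the shift-orbit of x* is dense in X), and let A, B ⊆ X be disjoint clopen sets. Then A ≼ B if and only if there exists a single function φ̃_{x*} : G → G determined by a block code whose restriction to A_{x*} = {g ∈ G : g(x*) ∈ A} is an injection into B_{x*} = {g ∈ G : g(x*) ∈ B}. -/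
/-!
STATEMENT 10 (Theorem `tutka` (2) of the paper):
For a transitive subshift `X ⊆ Λ^G` with transitive point `x*` and disjoint (relatively)
clopen `A, B ⊆ X`: `A ≼ B` iff there exists a single function `φ̃ : G → G` determined by
a block code (evaluated along `x*`) whose restriction to `A_{x*}` is an injection into
`B_{x*}`.
-/

open Pointwise

/-- `A` is a relatively clopen subset of the subshift `Xs`. -/
def RelClopen {G Λ : Type*} [Group G] [TopologicalSpace Λ] (Xs A : Set (G → Λ)) : Prop :=
  A ⊆ Xs ∧ IsClopen ((Subtype.val ⁻¹' A) : Set Xs)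

/-- Subequivalence `A ≼ B` inside the subshift `Xs`. -/
def SubshiftSubequiv {G Λ : Type*} [Group G] [TopologicalSpace Λ]
    (Xs A B : Set (G → Λ)) : Prop :=
  ∃ (k : ℕ) (Ai : Fin k → Set (G → Λ)) (g : Fin k → G),
    (∀ i, RelClopen Xs (Ai i)) ∧ A = ⋃ i, Ai i ∧
    (Pairwise fun i j => Disjoint (Ai i) (Ai j)) ∧
    (∀ i, shiftMap (g i) '' Ai i ⊆ B) ∧
    (Pairwise fun i j => Disjoint (shiftMap (g i) '' Ai i) (shiftMap (g j) '' Ai j))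

/-!
A block code `c` with values in `G` acts on configurations by `x ↦ c(x) · x`, and along a single
orbit by the map `a ↦ c(a · x) a` of `G`; the orbit map `a ↦ a · x` intertwines the two. Given
pieces of a subequivalence, let `c` be the shift applied on each piece: by compactness it is a block
code, and disjointness of the images says that the action of `c` is injective on `A`. Conversely the
level sets of `c` on `A` are the pieces.

That the action of `c` maps `A` into `B` and that it is injective on `A` can both be tested along a
dense orbit. The first is a closed condition. For the second, if `c(x) · x = c(y) · y` with `x` and
`y` in `A`, then `y = s · x` for `s = c(y)⁻¹ c(x)`. Membership in `A` and the values of `c` at `x`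
and at `s · x` persist at a nearby orbit point `h · x*`, so injectivity along the orbit gives
`s h = h`, and hence `x = y`.
-/

open Filter Topology

section RelClopen

variable {G Λ : Type*} [Group G] [TopologicalSpace Λ] {Xs A : Set (G → Λ)}

theorem RelClopen.isClosed (hA : RelClopen Xs A) (hXs : IsClosed Xs) : IsClosed A := by
  have himage := hXs.isClosedMap_subtype_val _ hA.2.isClosed
  rwa [Subtype.image_preimage_coe, Set.inter_eq_right.2 hA.1] at himage

theorem RelClopen.isOpen_preimage_val_of_subset (hA : RelClopen Xs A) {S : Set (G → Λ)}
    (hS : S ⊆ Xs) : IsOpen (Subtype.val ⁻¹' A : Set S) :=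
  hA.2.isOpen.preimage (continuous_inclusion hS)

theorem RelClopen.mem_nhdsWithin (hA : RelClopen Xs A) {x : G → Λ} (hx : x ∈ A) :
    A ∈ 𝓝[Xs] x :=
  preimage_coe_mem_nhds_subtype (a := ⟨x, hA.1 hx⟩).1 (hA.2.isOpen.mem_nhds hx)

theorem RelClopen.inter_isClopen (hA : RelClopen Xs A) {P : Set (G → Λ)} (hP : IsClopen P) :
    RelClopen Xs (A ∩ P) :=
  ⟨Set.inter_subset_left.trans hA.1, hA.2.inter (hP.preimage continuous_subtype_val)⟩

end RelClopen

section FiniteWindow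

variable {ι : Type*} {α : ι → Type*}

theorem exists_finset_forall_eq_of_mem_isOpen_subtype [∀ i, TopologicalSpace (α i)]
    {K : Set (∀ i, α i)} {V : Set K} (hV : IsOpen V) {z : K} (hz : z ∈ V) :
    ∃ I : Finset ι, ∀ y : K, (∀ i ∈ I, y.1 i = z.1 i) → y ∈ V := by
  obtain ⟨U, hU, rfl⟩ := isOpen_induced_iff.1 hV
  obtain ⟨I, u, hu, hIU⟩ := isOpen_pi_iff.1 hU z hz
  refine ⟨I, fun y hy => hIU fun i hi => ?_⟩
  rw [hy i hi]
  exact (hu i hi).2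

theorem exists_finset_factorsThrough_of_isLocallyConstant {Y : Type*}
    [∀ i, TopologicalSpace (α i)] [∀ i, DiscreteTopology (α i)] {K : Set (∀ i, α i)}
    (hK : IsCompact K) {f : K → Y} (hf : IsLocallyConstant f) :
    ∃ F : Finset ι, Function.FactorsThrough f fun (x : K) (i : ↥(F : Set ι)) => x.1 i := by
  classical
  have : CompactSpace K := isCompact_iff_compactSpace.1 hK
  choose I hI using fun z : K =>
    exists_finset_forall_eq_of_mem_isOpen_subtype (hf.isOpen_fiber (f z)) (z := z) rfl
  have hcylinder (z : K) : {y : K | ∀ i ∈ I z, y.1 i = z.1 i} ∈ 𝓝 z := by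
    refine IsOpen.mem_nhds ?_ fun _ _ => rfl
    have hopen : IsOpen ((I z : Set ι).pi fun i => {z.1 i}) :=
      isOpen_set_pi (I z).finite_toSet fun _ _ => isOpen_discrete _
    exact hopen.preimage continuous_subtype_val
  obtain ⟨t, -, ht⟩ := isCompact_univ.elim_nhds_subcover _ fun z _ => hcylinder z
  refine ⟨t.biUnion I, fun x y hxy => ?_⟩
  obtain ⟨z, hzt, hxz⟩ := Set.mem_iUnion₂.1 (ht (Set.mem_univ x))
  have hyx : ∀ i ∈ I z, y.1 i = x.1 i := fun i hi =>
    (congrFun hxy ⟨i, Finset.mem_biUnion.2 ⟨z, hzt, hi⟩⟩).symm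
  exact (hI z x hxz).trans (hI z y fun i hi => (hyx i hi).trans (hxz i hi)).symm

end FiniteWindow

section BlockCode

/-- A block code, regarded as a function on all of `Λ^ι`: its value at `x` is read off by `Ξ` from
the finite window `F`, and it takes values in a finite set `E`. -/
def IsBlockCode {ι Λ Y : Type*} (c : (ι → Λ) → Y) : Prop :=
  ∃ (F : Finset ι) (E : Finset Y) (Ξ : (↥(F : Set ι) → Λ) → Y),
    (∀ b, Ξ b ∈ E) ∧ ∀ x, c x = Ξ fun f => x f.1

variable {ι Λ Y : Type*}

theorem IsBlockCode.finite_range {c : (ι → Λ) → Y} (hc : IsBlockCode c) :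
    (Set.range c).Finite := by
  obtain ⟨F, E, Ξ, hE, hcΞ⟩ := hc
  refine E.finite_toSet.subset (Set.range_subset_iff.2 fun x => ?_)
  rw [hcΞ]
  exact hE _

variable [TopologicalSpace Λ] [DiscreteTopology Λ]

theorem IsBlockCode.isLocallyConstant {c : (ι → Λ) → Y} (hc : IsBlockCode c) :
    IsLocallyConstant c := by
  obtain ⟨F, E, Ξ, -, hcΞ⟩ := hc
  obtain rfl : c = Ξ ∘ fun x f => x f.1 := funext hcΞ
  exact (IsLocallyConstant.of_discrete Ξ).comp_continuous (by fun_prop)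

theorem exists_isBlockCode_extending [Nonempty Y] {K : Set (ι → Λ)} (hK : IsCompact K)
    {f : K → Y} (hf : IsLocallyConstant f) :
    ∃ c : (ι → Λ) → Y, IsBlockCode c ∧ ∀ x : K, c x = f x := by
  have : CompactSpace K := isCompact_iff_compactSpace.1 hK
  obtain ⟨F, hF⟩ := exists_finset_factorsThrough_of_isLocallyConstant hK hf
  let y₀ : Y := Classical.arbitrary Y
  let Ξ := Function.extend (fun (x : K) (i : ↥(F : Set ι)) => x.1 i) f fun _ => y₀
  have hΞ : (Set.range Ξ).Finite := by
    refine (hf.range_finite.union ((Set.finite_singleton y₀).subset ?_)).subset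
      (Set.range_extend_subset _ _ _)
    rintro _ ⟨_, _, rfl⟩
    rfl
  refine ⟨fun x => Ξ fun i => x i.1, ⟨F, hΞ.toFinset, Ξ, fun b => ?_, fun _ => rfl⟩,
    hF.extend_apply _⟩
  exact hΞ.mem_toFinset.2 (Set.mem_range_self b)

end BlockCode

section Shift

variable {G Λ : Type*} [Group G]

theorem shiftMap_shiftMap (g h : G) (x : G → Λ) :
    shiftMap g (shiftMap h x) = shiftMap (g * h) x :=
  funext fun a => congrArg x (mul_assoc a g h)

theorem shiftMap_one (x : G → Λ) : shiftMap 1 x = x :=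
  funext fun a => congrArg x (mul_one a)

theorem shiftMap_injective (g : G) : Function.Injective (shiftMap g : (G → Λ) → G → Λ) :=
  Function.LeftInverse.injective (g := shiftMap g⁻¹) fun x => by
    rw [shiftMap_shiftMap, inv_mul_cancel, shiftMap_one]

theorem continuous_shiftMap [TopologicalSpace Λ] (g : G) :
    Continuous (shiftMap g : (G → Λ) → G → Λ) := by
  unfold shiftMap
  fun_prop

/-- The orbit of a configuration under the shift action. -/
def shiftOrbit (x : G → Λ) : Set (G → Λ) :=
  Set.range fun h : G => shiftMap h x

theorem mapsTo_shiftMap_shiftOrbit (g : G) (x : G → Λ) :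
    Set.MapsTo (shiftMap g) (shiftOrbit x) (shiftOrbit x) := by
  rintro _ ⟨h, rfl⟩
  exact ⟨g * h, (shiftMap_shiftMap g h x).symm⟩

/-- The transformation of `Λ^G` that shifts each configuration `x` by the group element `c x`. -/
def codeShift (c : (G → Λ) → G) (x : G → Λ) : G → Λ :=
  shiftMap (c x) x

/-- The map `φ̃_x : G → G` determined by `c` along the orbit of `x`. -/
def codeOrbitMap (c : (G → Λ) → G) (x : G → Λ) (a : G) : G :=
  c (shiftMap a x) * a

theorem shiftMap_codeOrbitMap (c : (G → Λ) → G) (x : G → Λ) (a : G) :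
    shiftMap (codeOrbitMap c x a) x = codeShift c (shiftMap a x) :=
  (shiftMap_shiftMap _ _ _).symm

theorem continuous_codeShift [TopologicalSpace Λ] {c : (G → Λ) → G} (hc : IsLocallyConstant c) :
    Continuous (codeShift c) :=
  continuous_iff_continuousAt.2 fun x =>
    (continuous_shiftMap (c x)).continuousAt.congr <| (hc.eventually_eq x).mono fun y hy => by
      rw [codeShift, hy]

end Shift

section Subequivalence

variable {G Λ : Type*} [Group G] [TopologicalSpace Λ] {Xs A B : Set (G → Λ)}

theorem SubshiftSubequiv.of_finite {ι : Type*} [Finite ι] {P : ι → Set (G → Λ)} {g : ι → G}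
    (hP : ∀ i, RelClopen Xs (P i)) (hA : A = ⋃ i, P i)
    (hdisj : Pairwise fun i j => Disjoint (P i) (P j)) (hB : ∀ i, shiftMap (g i) '' P i ⊆ B)
    (hdisj_image :
      Pairwise fun i j => Disjoint (shiftMap (g i) '' P i) (shiftMap (g j) '' P j)) :
    SubshiftSubequiv Xs A B := by
  obtain ⟨n, ⟨e⟩⟩ := Finite.exists_equiv_fin ι
  exact ⟨n, P ∘ e.symm, g ∘ e.symm, fun _ => hP _, hA.trans (e.symm.iSup_comp (g := P)).symm,
    hdisj.comp_of_injective e.symm.injective, fun _ => hB _,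
    hdisj_image.comp_of_injective e.symm.injective⟩

theorem SubshiftSubequiv.of_codeShift {c : (G → Λ) → G} (hc : IsLocallyConstant c)
    (hfin : (Set.range c).Finite) (hA : RelClopen Xs A) (hmaps : Set.MapsTo (codeShift c) A B)
    (hinj : Set.InjOn (codeShift c) A) : SubshiftSubequiv Xs A B := by
  have : Finite (Set.range c) := hfin
  refine SubshiftSubequiv.of_finite (ι := Set.range c) (P := fun e => A ∩ c ⁻¹' {e.1})
    (g := Subtype.val) (fun e => hA.inter_isClopen (hc.isClopen_fiber e.1)) ?_ ?_ ?_ ?_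
  · ext x
    simp
  · rintro e e' hne
    exact Set.disjoint_left.2 fun x hx hx' => hne (Subtype.ext (hx.2.symm.trans hx'.2))
  · rintro ⟨_, _⟩ _ ⟨x, ⟨hxA, rfl⟩, rfl⟩
    exact hmaps hxA
  · rintro ⟨e, _⟩ ⟨e', _⟩ hne
    refine Set.disjoint_left.2 ?_
    rintro _ ⟨x, ⟨hxA, rfl⟩, rfl⟩ ⟨y, ⟨hyA, rfl⟩, hyx⟩
    obtain rfl : y = x := hinj hyA hxA hyx
    exact hne rfl

theorem SubshiftSubequiv.exists_isLocallyConstant (h : SubshiftSubequiv Xs A B) :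
    ∃ c : A → G, IsLocallyConstant c ∧ (∀ x, shiftMap (c x) x.1 ∈ B) ∧
      Function.Injective fun x => shiftMap (c x) x.1 := by
  obtain ⟨k, P, g, hP, hA, hdisj, hB, hdisj_image⟩ := h
  have hAXs : A ⊆ Xs := hA ▸ Set.iUnion_subset fun i => (hP i).1
  choose piece hpiece using fun x : A => Set.mem_iUnion.1 (hA.subset x.2)
  have hpiece_eq {x : A} {i : Fin k} (hx : x.1 ∈ P i) : piece x = i :=
    hdisj.eq (Set.not_disjoint_iff.2 ⟨x, hpiece x, hx⟩)
  have hpiece_const : IsLocallyConstant piece := IsLocallyConstant.iff_isOpen_fiber.2 fun i => by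
    have hfiber : piece ⁻¹' {i} = Subtype.val ⁻¹' P i :=
      Set.ext fun x => ⟨fun hx => hx ▸ hpiece x, hpiece_eq⟩
    exact hfiber ▸ (hP i).isOpen_preimage_val_of_subset hAXs
  refine ⟨g ∘ piece, hpiece_const.comp g, fun x => hB _ ⟨x, hpiece x, rfl⟩, fun x y hxy => ?_⟩
  have hpiece_xy : piece x = piece y :=
    hdisj_image.eq (Set.not_disjoint_iff.2 ⟨_, ⟨x, hpiece x, rfl⟩, ⟨y, hpiece y, hxy.symm⟩⟩)
  simp only [Function.comp_apply, hpiece_xy] at hxy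
  exact Subtype.ext (shiftMap_injective _ hxy)

theorem subshiftSubequiv_iff_exists_isBlockCode [DiscreteTopology Λ] (hA : RelClopen Xs A)
    (hA_compact : IsCompact A) :
    SubshiftSubequiv Xs A B ↔
      ∃ c : (G → Λ) → G, IsBlockCode c ∧ Set.MapsTo (codeShift c) A B ∧
        Set.InjOn (codeShift c) A := by
  constructor
  · intro h
    obtain ⟨f, hf, hmaps, hinj⟩ := h.exists_isLocallyConstant
    obtain ⟨c, hc, hcf⟩ := exists_isBlockCode_extending hA_compact hf
    have hshift (x : A) : codeShift c x = shiftMap (f x) x := congrArg (shiftMap · x.1) (hcf x)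
    refine ⟨c, hc, fun x hx => ?_, fun x hx y hy hxy => ?_⟩
    · rw [hshift ⟨x, hx⟩]
      exact hmaps ⟨x, hx⟩
    · rw [hshift ⟨x, hx⟩, hshift ⟨y, hy⟩] at hxy
      exact congrArg Subtype.val (hinj hxy)
  · rintro ⟨c, hc, hmaps, hinj⟩
    exact .of_codeShift hc.isLocallyConstant hc.finite_range hA hmaps hinj

end Subequivalence

section DenseOrbit

variable {G Λ : Type*} [Group G] {Xs A B : Set (G → Λ)} {c : (G → Λ) → G} {xstar : G → Λ}

theorem mapsTo_codeOrbitMap_of_mapsTo_codeShift (hmaps : Set.MapsTo (codeShift c) A B) :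
    Set.MapsTo (codeOrbitMap c xstar) {g | shiftMap g xstar ∈ A} {g | shiftMap g xstar ∈ B} := by
  intro a ha
  rw [Set.mem_ofPred_eq, shiftMap_codeOrbitMap]
  exact hmaps ha

theorem injOn_codeOrbitMap_of_injOn_codeShift (hinj : Set.InjOn (codeShift c) A) :
    Set.InjOn (codeOrbitMap c xstar) {g | shiftMap g xstar ∈ A} := by
  intro a ha b hb hab
  have hpoint : shiftMap a xstar = shiftMap b xstar := hinj ha hb <| by
    rw [← shiftMap_codeOrbitMap, ← shiftMap_codeOrbitMap, hab]
  rw [codeOrbitMap, codeOrbitMap, hpoint] at hab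
  exact mul_left_cancel hab

variable [TopologicalSpace Λ]

theorem RelClopen.eventually_nhdsWithin_shiftOrbit (hA : RelClopen Xs A)
    (htrans : closure (shiftOrbit xstar) = Xs) {x : G → Λ} (hx : x ∈ A) :
    ∀ᶠ z in 𝓝[shiftOrbit xstar] x, z ∈ A :=
  nhdsWithin_mono x (htrans ▸ subset_closure) (hA.mem_nhdsWithin hx)

theorem exists_shiftMap_of_eventually_nhdsWithin_shiftOrbit {x : G → Λ}
    (hx : x ∈ closure (shiftOrbit xstar)) {p : (G → Λ) → Prop}
    (hp : ∀ᶠ z in 𝓝[shiftOrbit xstar] x, p z) : ∃ h : G, p (shiftMap h xstar) := by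
  have : (𝓝[shiftOrbit xstar] x).NeBot := mem_closure_iff_nhdsWithin_neBot.1 hx
  obtain ⟨_, hpz, h, rfl⟩ := (hp.and self_mem_nhdsWithin).exists
  exact ⟨h, hpz⟩

theorem mapsTo_codeShift_of_mapsTo_codeOrbitMap (hA : RelClopen Xs A) (hB : IsClosed B)
    (htrans : closure (shiftOrbit xstar) = Xs) (hc : IsLocallyConstant c)
    (hmaps : Set.MapsTo (codeOrbitMap c xstar)
      {g | shiftMap g xstar ∈ A} {g | shiftMap g xstar ∈ B}) :
    Set.MapsTo (codeShift c) A B := by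
  intro x hx
  by_contra hxB
  have hnear : ∀ᶠ z in 𝓝[shiftOrbit xstar] x, z ∈ A ∧ codeShift c z ∉ B :=
    (hA.eventually_nhdsWithin_shiftOrbit htrans hx).and <| nhdsWithin_le_nhds <|
      (continuous_codeShift hc).continuousAt.eventually (hB.isOpen_compl.mem_nhds hxB)
  obtain ⟨h, hhA, hhB⟩ :=
    exists_shiftMap_of_eventually_nhdsWithin_shiftOrbit (htrans ▸ hA.1 hx) hnear
  rw [← shiftMap_codeOrbitMap] at hhB
  exact hhB (hmaps hhA)

theorem injOn_codeShift_of_injOn_codeOrbitMap (hA : RelClopen Xs A)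
    (htrans : closure (shiftOrbit xstar) = Xs) (hc : IsLocallyConstant c)
    (hinj : Set.InjOn (codeOrbitMap c xstar) {g | shiftMap g xstar ∈ A}) :
    Set.InjOn (codeShift c) A := by
  intro x hx y hy hxy
  set s : G := (c y)⁻¹ * c x with hs
  have hsx : shiftMap s x = y := by
    apply shiftMap_injective (c y)
    rw [shiftMap_shiftMap, hs, mul_inv_cancel_left]
    exact hxy
  have htendsto : Tendsto (shiftMap s) (𝓝[shiftOrbit xstar] x) (𝓝[shiftOrbit xstar] y) :=
    hsx ▸ (continuous_shiftMap s).continuousWithinAt.tendsto_nhdsWithin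
      (mapsTo_shiftMap_shiftOrbit s xstar)
  have hnear {w : G → Λ} (hw : w ∈ A) : ∀ᶠ z in 𝓝[shiftOrbit xstar] w, z ∈ A ∧ c z = c w :=
    (hA.eventually_nhdsWithin_shiftOrbit htrans hw).and (nhdsWithin_le_nhds (hc.eventually_eq w))
  obtain ⟨h, ⟨hhA, hch⟩, hshA, hcsh⟩ := exists_shiftMap_of_eventually_nhdsWithin_shiftOrbit
    (htrans ▸ hA.1 hx) ((hnear hx).and (htendsto.eventually (hnear hy)))
  rw [shiftMap_shiftMap] at hshA hcsh
  have hfix : s * h = h := hinj hshA hhA <| by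
    rw [codeOrbitMap, codeOrbitMap, hch, hcsh, hs, mul_assoc, mul_inv_cancel_left]
  rw [← hsx, mul_eq_right.1 hfix, shiftMap_one]

end DenseOrbit

theorem stmt10_general {G Λ : Type*} [Group G] [TopologicalSpace Λ] [DiscreteTopology Λ]
    {Xs : Set (G → Λ)} (hcompact : IsCompact Xs) {xstar : G → Λ}
    (htrans : closure (Set.range fun h : G => shiftMap h xstar) = Xs)
    {A B : Set (G → Λ)} (hA : RelClopen Xs A) (hB : IsClosed B) :
    SubshiftSubequiv Xs A B ↔
      ∃ φt : G → G,
        (∃ (F E : Finset G) (Ξ : (↥(F : Set G) → Λ) → G),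
          (∀ b, Ξ b ∈ E) ∧
          ∀ a : G, φt a = Ξ (fun f => shiftMap a xstar f.1) * a) ∧
        Set.MapsTo φt {g : G | shiftMap g xstar ∈ A} {g : G | shiftMap g xstar ∈ B} ∧
        Set.InjOn φt {g : G | shiftMap g xstar ∈ A} := by
  have hA_compact : IsCompact A :=
    hcompact.of_isClosed_subset (hA.isClosed hcompact.isClosed) hA.1
  rw [subshiftSubequiv_iff_exists_isBlockCode hA hA_compact]
  constructor
  · rintro ⟨c, ⟨F, E, Ξ, hE, hcΞ⟩, hmaps, hinj⟩
    exact ⟨codeOrbitMap c xstar, ⟨F, E, Ξ, hE, fun a => congrArg (· * a) (hcΞ _)⟩,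
      mapsTo_codeOrbitMap_of_mapsTo_codeShift hmaps, injOn_codeOrbitMap_of_injOn_codeShift hinj⟩
  · rintro ⟨φt, ⟨F, E, Ξ, hE, hφΞ⟩, hmaps, hinj⟩
    let c : (G → Λ) → G := fun x => Ξ fun f => x f.1
    have hc : IsBlockCode c := ⟨F, E, Ξ, hE, fun _ => rfl⟩
    obtain rfl : φt = codeOrbitMap c xstar := funext hφΞ
    exact ⟨c, hc, mapsTo_codeShift_of_mapsTo_codeOrbitMap hA hB htrans hc.isLocallyConstant hmaps,
      injOn_codeShift_of_injOn_codeOrbitMap hA htrans hc.isLocallyConstant hinj⟩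

theorem stmt10 {G Λ : Type*} [Group G] [Countable G] [Fintype Λ]
    [TopologicalSpace Λ] [DiscreteTopology Λ]
    (Xs : Set (G → Λ)) (hclosed : IsClosed Xs)
    (hinv : ∀ h : G, ∀ x ∈ Xs, shiftMap h x ∈ Xs)
    (xstar : G → Λ) (hxstar : xstar ∈ Xs)
    (htrans : closure (Set.range fun h : G => shiftMap h xstar) = Xs)
    (A B : Set (G → Λ)) (hA : RelClopen Xs A) (hB : RelClopen Xs B)
    (hAB : Disjoint A B) :
    SubshiftSubequiv Xs A B ↔
      ∃ φt : G → G,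
        (∃ (F E : Finset G) (Ξ : (↥(F : Set G) → Λ) → G),
          (∀ b, Ξ b ∈ E) ∧
          ∀ a : G, φt a = Ξ (fun f => shiftMap a xstar f.1) * a) ∧
        Set.MapsTo φt {g : G | shiftMap g xstar ∈ A} {g : G | shiftMap g xstar ∈ B} ∧
        Set.InjOn φt {g : G | shiftMap g xstar ∈ A} :=
  stmt10_general hclosed.isCompact htrans hA (hB.isClosed hclosed)
end
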